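/- arXiv:2409.06101 — 2 statements merged into one kernel-verified Lean document; each statement's English description precedes it below -/
import Mathlib

section
/- If E_x ∈ ℝ^{r_x × d_x} has full row rank r_x and Ω Ωᵀ is invertible, then the function G ↦ L_pred(E_x, G) = (1/n)‖E_x Y − G E_{xu} Ω‖_F² is strictly convex on ℝ^{r_x × (r_x + d_u)}. -/
open Matrix

/-- Squared Frobenius norm of a real matrix. -/
noncomputable def frobSq {m n : Type*} [Fintype m] [Fintype n] (M : Matrix m n ℝ) : ℝ :=
  ∑ i, ∑ j, (M i j) ^ 2

/-- The augmented block-diagonal matrix `E_{xu}` with blocks `E_x` and `I_{d_u}`. -/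
def Exu {d_x d_u r_x : ℕ} (Ex : Matrix (Fin r_x) (Fin d_x) ℝ) :
    Matrix (Fin r_x ⊕ Fin d_u) (Fin d_x ⊕ Fin d_u) ℝ :=
  Matrix.fromBlocks Ex 0 0 1

/-- The prediction loss `L_pred(E_x, G) = (1/n) ‖E_x Y − G E_{xu} Ω‖_F²`. -/
noncomputable def Lpred {d_x d_u r_x n : ℕ}
    (Y : Matrix (Fin d_x) (Fin n) ℝ) (Ω : Matrix (Fin d_x ⊕ Fin d_u) (Fin n) ℝ)
    (Ex : Matrix (Fin r_x) (Fin d_x) ℝ)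
    (G : Matrix (Fin r_x) (Fin r_x ⊕ Fin d_u) ℝ) : ℝ :=
  (1 / (n : ℝ)) * frobSq (Ex * Y - G * Exu (d_u := d_u) Ex * Ω)

/-!
The squared Frobenius norm is a sum of the strictly convex functions `t ↦ t ^ 2` of the separate
entries, hence strictly convex. The residual `E_x Y - G E_{xu} Ω` is affine in `G`, and strict
convexity survives precomposition with an affine map as soon as that map is injective. Here
injectivity means that `E_{xu} Ω` can be cancelled on the right, which holds because `E_x`, hence
`E_{xu}`, and `Ω` all have right inverses.
-/

section Convexity

variable {𝕜 E F β ι : Type*}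

theorem strictConvexOn_comp_affineMap_of_injective [Ring 𝕜] [PartialOrder 𝕜]
    [AddCommGroup E] [Module 𝕜 E] [AddCommGroup F] [Module 𝕜 F]
    [AddCommMonoid β] [PartialOrder β] [SMul 𝕜 β] {s : Set F} {f : F → β}
    (hf : StrictConvexOn 𝕜 s f) {g : E →ᵃ[𝕜] F} (hg : Function.Injective g) :
    StrictConvexOn 𝕜 (g ⁻¹' s) (f ∘ g) :=
  ⟨hf.1.affine_preimage g, fun x hx y hy hxy a b ha hb hab => by
    simpa only [Function.comp_apply, Convex.combo_affine_apply hab] using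
      hf.2 hx hy (hg.ne hxy) ha hb hab⟩

theorem strictConvexOn_const_smul [CommSemiring 𝕜] [PartialOrder 𝕜] [AddCommMonoid E] [SMul 𝕜 E]
    [AddCommMonoid β] [PartialOrder β] [Module 𝕜 β] [PosSMulStrictMono 𝕜 β]
    {s : Set E} {f : E → β} {c : 𝕜} (hc : 0 < c) (hf : StrictConvexOn 𝕜 s f) :
    StrictConvexOn 𝕜 s fun x => c • f x :=
  ⟨hf.1, fun x hx y hy hxy a b ha hb hab =>
    calc
      c • f (a • x + b • y) < c • (a • f x + b • f y) :=
        smul_lt_smul_of_pos_left (hf.2 hx hy hxy ha hb hab) hc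
      _ = a • c • f x + b • c • f y := by rw [smul_add, smul_comm c, smul_comm c]⟩

theorem strictConvexOn_pi_sum [Fintype ι] {V : ι → Type*} [Semiring 𝕜] [PartialOrder 𝕜]
    [∀ i, AddCommMonoid (V i)] [∀ i, Module 𝕜 (V i)]
    [AddCommMonoid β] [PartialOrder β] [IsOrderedCancelAddMonoid β] [Module 𝕜 β]
    {s : ∀ i, Set (V i)} {f : ∀ i, V i → β} (hf : ∀ i, StrictConvexOn 𝕜 (s i) (f i)) :
    StrictConvexOn 𝕜 (Set.univ.pi s) fun x => ∑ i, f i (x i) := by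
  refine ⟨convex_pi fun i _ => (hf i).1, fun x hx y hy hxy a b ha hb hab => ?_⟩
  obtain ⟨k, hk⟩ := Function.ne_iff.1 hxy
  calc
    ∑ i, f i (a • x i + b • y i) < ∑ i, (a • f i (x i) + b • f i (y i)) :=
      Finset.sum_lt_sum
        (fun i _ => (hf i).convexOn.2 (hx i trivial) (hy i trivial) ha.le hb.le hab)
        ⟨k, Finset.mem_univ k, (hf k).2 (hx k trivial) (hy k trivial) hk ha hb hab⟩
    _ = a • ∑ i, f i (x i) + b • ∑ i, f i (y i) := by
      rw [Finset.sum_add_distrib, Finset.smul_sum, Finset.smul_sum]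

end Convexity

section Frobenius

variable {l m n : Type*} [Fintype m] [Fintype n]

theorem strictConvexOn_frobSq :
    StrictConvexOn ℝ Set.univ (frobSq : Matrix m n ℝ → ℝ) := by
  have sq : StrictConvexOn ℝ Set.univ fun t : ℝ => t ^ 2 := even_two.strictConvexOn_pow two_ne_zero
  have row : StrictConvexOn ℝ Set.univ fun v : n → ℝ => ∑ j, v j ^ 2 := by
    simpa only [Set.pi_univ] using strictConvexOn_pi_sum fun _ : n => sq
  have entries : StrictConvexOn ℝ Set.univ fun M : m → n → ℝ => ∑ i, ∑ j, M i j ^ 2 := by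
    simpa only [Set.pi_univ] using strictConvexOn_pi_sum fun _ : m => row
  exact entries

theorem strictConvexOn_frobSq_sub_mul [Fintype l] (A : Matrix m n ℝ) {C : Matrix l n ℝ}
    (hC : Function.Injective fun G : Matrix m l ℝ => G * C) :
    StrictConvexOn ℝ Set.univ fun G : Matrix m l ℝ => frobSq (A - G * C) := by
  let residual : Matrix m l ℝ →ᵃ[ℝ] Matrix m n ℝ :=
    AffineMap.const ℝ _ A - (mulRightLinearMap m ℝ C).toAffineMap
  have residual_apply (G : Matrix m l ℝ) : residual G = A - G * C := rfl
  have residual_injective : Function.Injective residual := (sub_right_injective (b := A)).comp hC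
  simpa only [Set.preimage_univ, Function.comp_def, residual_apply] using
    strictConvexOn_comp_affineMap_of_injective strictConvexOn_frobSq residual_injective

end Frobenius

theorem exists_mul_eq_one_of_rank_eq_card {K m n : Type*} [Field K] [Fintype m] [DecidableEq m]
    [Fintype n] {A : Matrix m n K} (hA : A.rank = Fintype.card m) :
    ∃ B : Matrix n m K, A * B = 1 := by
  have range_eq_top : A.mulVecLin.range = ⊤ :=
    Submodule.eq_top_of_finrank_eq (hA.trans (Module.finrank_fintype_fun_eq_card K).symm)
  exact mulVec_surjective_iff_exists_right_inverse.1 (LinearMap.range_eq_top.1 range_eq_top)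

theorem mul_left_injective_of_isUnit_mul {R l m n : Type*} [CommRing R] [Fintype m]
    [DecidableEq m] [Fintype n] {A : Matrix m n R} {B : Matrix n m R} (h : IsUnit (A * B)) :
    Function.Injective fun M : Matrix l m R => M * A := by
  obtain ⟨C, hC⟩ := h.exists_right_inv
  exact mul_left_injective_of_inv A (B * C) (by rw [← Matrix.mul_assoc, hC])

section Exu

variable {d r s d_u : ℕ}

theorem Exu_one : Exu (d_u := d_u) (1 : Matrix (Fin r) (Fin r) ℝ) = 1 :=
  fromBlocks_one

theorem Exu_mul_Exu (A : Matrix (Fin r) (Fin d) ℝ) (B : Matrix (Fin d) (Fin s) ℝ) :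
    Exu (d_u := d_u) A * Exu (d_u := d_u) B = Exu (A * B) := by
  simp [Exu, fromBlocks_multiply]

theorem mul_Exu_injective_of_rank_eq {l : Type*} {A : Matrix (Fin r) (Fin d) ℝ}
    (hA : A.rank = r) :
    Function.Injective fun M : Matrix l (Fin r ⊕ Fin d_u) ℝ => M * Exu (d_u := d_u) A := by
  obtain ⟨B, hB⟩ := exists_mul_eq_one_of_rank_eq_card (hA.trans (Fintype.card_fin r).symm)
  exact mul_left_injective_of_inv _ (Exu B) (by rw [Exu_mul_Exu, hB, Exu_one])

end Exu

/-- If `E_x` has full row rank `r_x` and `Ω Ωᵀ` is invertible, then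
`G ↦ L_pred(E_x, G)` is strictly convex on the whole space. -/
theorem lpred_strictConvexOn (d_x d_u r_x n : ℕ)
    (hdx : 0 < d_x) (hdu : 0 < d_u) (hrx : 0 < r_x) (hn : 0 < n) (hrd : r_x ≤ d_x)
    (Y : Matrix (Fin d_x) (Fin n) ℝ) (Ω : Matrix (Fin d_x ⊕ Fin d_u) (Fin n) ℝ)
    (hΩ : IsUnit (Ω * Ωᵀ))
    (Ex : Matrix (Fin r_x) (Fin d_x) ℝ) (hEx : Ex.rank = r_x) :
    StrictConvexOn ℝ Set.univ
      (fun G : Matrix (Fin r_x) (Fin r_x ⊕ Fin d_u) ℝ => Lpred Y Ω Ex G) := by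
  have cancel : Function.Injective fun G : Matrix (Fin r_x) (Fin r_x ⊕ Fin d_u) ℝ =>
      G * (Exu (d_u := d_u) Ex * Ω) := by
    simp only [← Matrix.mul_assoc]
    exact (mul_left_injective_of_isUnit_mul hΩ).comp (mul_Exu_injective_of_rank_eq hEx)
  have inv_n_pos : (0 : ℝ) < 1 / n := by positivity
  simpa only [Lpred, Matrix.mul_assoc, smul_eq_mul] using
    strictConvexOn_const_smul inv_n_pos (strictConvexOn_frobSq_sub_mul (Ex * Y) cancel)
end

section
/- Let A ∈ ℝ^{m × n} be a real matrix with full row rank, i.e., A Aᵀ is invertible. Then, as ε → 0 (through nonzero real values), the matrices (Aᵀ A + ε² I_n)⁻¹ Aᵀ converge to Aᵀ (A Aᵀ)⁻¹; in particular, for every nonzero ε the matrix Aᵀ A + ε² I_n is invertible. -/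
open Matrix Filter

/-!
The push-through identity `(BA + c)⁻¹ B = B (AB + c)⁻¹`, valid for every unit `c`, moves the
regularisation from `BA`, which is typically singular, to the invertible matrix `AB`, where
inversion is continuous. For `B = Aᴴ` and `c = ε²` the regularised matrices are positive definite
when `ε ≠ 0`, hence invertible.
-/

section PushThrough

variable {m n R : Type*} [Fintype m] [DecidableEq m] [Fintype n] [DecidableEq n] [CommRing R]

lemma inv_mul_eq_mul_inv_of_mul_eq_mul {P : Matrix m m R} {Q : Matrix n n R} {X : Matrix m n R}
    (hP : IsUnit P) (hQ : IsUnit Q) (h : P * X = X * Q) : P⁻¹ * X = X * Q⁻¹ := by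
  rw [isUnit_iff_isUnit_det] at hP hQ
  calc P⁻¹ * X = P⁻¹ * (X * Q * Q⁻¹) := by rw [mul_nonsing_inv_cancel_right _ _ hQ]
    _ = P⁻¹ * (P * (X * Q⁻¹)) := by rw [← h, Matrix.mul_assoc]
    _ = X * Q⁻¹ := nonsing_inv_mul_cancel_left _ _ hP

lemma isUnit_mul_add_smul_one_comm (A : Matrix m n R) (B : Matrix n m R) {c : R} (hc : IsUnit c) :
    IsUnit (A * B + c • (1 : Matrix m m R)) ↔ IsUnit (B * A + c • (1 : Matrix n n R)) := by
  obtain ⟨u, rfl⟩ := hc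
  have factor_left : A * B + u • (1 : Matrix m m R) = u • ((u⁻¹ • A) * B + 1) := by
    simp
  have factor_right : B * A + u • (1 : Matrix n n R) = u • (B * (u⁻¹ • A) + 1) := by
    simp
  rw [← Units.smul_def, ← Units.smul_def, factor_left, factor_right, isUnit_smul_iff,
    isUnit_smul_iff, isUnit_iff_isUnit_det, isUnit_iff_isUnit_det, det_mul_add_one_comm]

/-- If one of the two regularised matrices is singular then so is the other, and both sides vanish
because `⁻¹` of a singular matrix is `0`. -/
lemma inv_mul_add_smul_one_mul (A : Matrix m n R) (B : Matrix n m R) {c : R} (hc : IsUnit c) :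
    (B * A + c • (1 : Matrix n n R))⁻¹ * B = B * (A * B + c • (1 : Matrix m m R))⁻¹ := by
  have intertwine :
      (B * A + c • (1 : Matrix n n R)) * B = B * (A * B + c • (1 : Matrix m m R)) := by
    simp [Matrix.add_mul, Matrix.mul_add, Matrix.mul_assoc]
  have unit_comm := isUnit_mul_add_smul_one_comm A B hc
  by_cases h : IsUnit (A * B + c • (1 : Matrix m m R))
  · exact inv_mul_eq_mul_inv_of_mul_eq_mul (unit_comm.mp h) h intertwine
  · have h' := mt unit_comm.mpr h
    rw [isUnit_iff_isUnit_det] at h h'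
    simp [nonsing_inv_apply_not_isUnit _ h, nonsing_inv_apply_not_isUnit _ h']

end PushThrough

section Limit

open scoped Topology

variable {m n K : Type*} [Fintype m] [DecidableEq m] [Fintype n] [DecidableEq n]
  [Field K] [TopologicalSpace K] [IsTopologicalDivisionRing K]

lemma continuousAt_matrix_inv_of_isUnit {M : Matrix n n K} (hM : IsUnit M) :
    ContinuousAt Inv.inv M := by
  have det_ne_zero : M.det ≠ 0 := ((isUnit_iff_isUnit_det M).mp hM).ne_zero
  refine continuousAt_matrix_inv M ?_
  rw [Ring.inverse_eq_inv']
  exact continuousAt_inv₀ det_ne_zero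

lemma tendsto_inv_mul_add_smul_one_mul {A : Matrix m n K} {B : Matrix n m K}
    (hAB : IsUnit (A * B)) :
    Tendsto (fun c : K => (B * A + c • (1 : Matrix n n K))⁻¹ * B)
      (𝓝[≠] 0) (𝓝 (B * (A * B)⁻¹)) := by
  have regularised : Tendsto (fun c : K => A * B + c • (1 : Matrix m m K)) (𝓝 0)
      (𝓝 (A * B)) := by
    have : Continuous fun c : K => A * B + c • (1 : Matrix m m K) := by fun_prop
    simpa only [zero_smul, add_zero] using this.tendsto 0
  have pushed : Tendsto (fun c : K => B * (A * B + c • (1 : Matrix m m K))⁻¹) (𝓝 0)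
      (𝓝 (B * (A * B)⁻¹)) :=
    (Continuous.matrix_mul continuous_const continuous_id).continuousAt.tendsto.comp
      ((continuousAt_matrix_inv_of_isUnit hAB).tendsto.comp regularised)
  refine (pushed.mono_left nhdsWithin_le_nhds).congr' ?_
  filter_upwards [self_mem_nhdsWithin] with c hc
  exact (inv_mul_add_smul_one_mul A B (IsUnit.mk0 c hc)).symm

end Limit

section PosDef

variable {m n α R : Type*} [Fintype m] [Finite n] [DecidableEq n]
  [CommSemiring α] [PartialOrder α] [StarRing α] [StarOrderedRing α]
  [Ring R] [PartialOrder R] [StarRing R] [StarOrderedRing R] [NoZeroDivisors R]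
  [Algebra α R] [StarModule α R] [PosSMulStrictMono α R]

lemma posDef_conjTranspose_mul_self_add_smul_one (A : Matrix m n R) {a : α} (ha : 0 < a) :
    (Aᴴ * A + a • (1 : Matrix n n R)).PosDef :=
  PosDef.posSemidef_add (posSemidef_conjTranspose_mul_self A) (PosDef.one.smul ha)

end PosDef

section Ridge

open scoped Topology

variable {m n 𝕜 : Type*} [Fintype m] [DecidableEq m] [Fintype n] [DecidableEq n] [RCLike 𝕜]

open scoped ComplexOrder in
theorem ridge_limit_pinv_general (A : Matrix m n 𝕜) (hA : IsUnit (A * Aᴴ)) :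
    (∀ ε : ℝ, ε ≠ 0 → IsUnit (Aᴴ * A + ε ^ 2 • (1 : Matrix n n 𝕜))) ∧
    Tendsto (fun ε : ℝ => (Aᴴ * A + ε ^ 2 • (1 : Matrix n n 𝕜))⁻¹ * Aᴴ)
      (𝓝[≠] 0) (𝓝 (Aᴴ * (A * Aᴴ)⁻¹)) := by
  refine ⟨fun ε hε => (posDef_conjTranspose_mul_self_add_smul_one A (by positivity)).isUnit, ?_⟩
  have sq_tendsto : Tendsto (fun ε : ℝ => ((ε ^ 2 : ℝ) : 𝕜)) (𝓝[≠] 0) (𝓝[≠] 0) := by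
    have : Continuous fun ε : ℝ => ((ε ^ 2 : ℝ) : 𝕜) := by fun_prop
    refine tendsto_nhdsWithin_of_tendsto_nhds_of_eventually_within _ ?_ ?_
    · simpa using (this.tendsto 0).mono_left nhdsWithin_le_nhds
    · filter_upwards [self_mem_nhdsWithin] with ε hε
      simpa using hε
  simpa only [Function.comp_def, RCLike.real_smul_eq_coe_smul (K := 𝕜)] using
    (tendsto_inv_mul_add_smul_one_mul hA).comp sq_tendsto

end Ridge

/-- If `A ∈ ℝ^{m × n}` has full row rank (i.e. `A Aᵀ` is invertible), then for every
nonzero `ε` the matrix `Aᵀ A + ε² I_n` is invertible, and as `ε → 0` through nonzero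
values, `(Aᵀ A + ε² I_n)⁻¹ Aᵀ → Aᵀ (A Aᵀ)⁻¹`. -/
theorem ridge_limit_pinv (m n : ℕ) (hm : 0 < m) (hn : 0 < n)
    (A : Matrix (Fin m) (Fin n) ℝ) (hA : IsUnit (A * Aᵀ)) :
    (∀ ε : ℝ, ε ≠ 0 → IsUnit (Aᵀ * A + ε ^ 2 • (1 : Matrix (Fin n) (Fin n) ℝ))) ∧
    Tendsto (fun ε : ℝ => (Aᵀ * A + ε ^ 2 • (1 : Matrix (Fin n) (Fin n) ℝ))⁻¹ * Aᵀ)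
      (nhdsWithin 0 {(0 : ℝ)}ᶜ) (nhds (Aᵀ * (A * Aᵀ)⁻¹)) := by
  rw [← conjTranspose_eq_transpose_of_trivial] at hA ⊢
  exact ridge_limit_pinv_general A hA
end
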